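/- In the Nehari setting, let Ψ = Φ ∘ m on the unit sphere S, where m(w) = s_w w. (i) If {w_n} ⊂ S is a Palais–Smale sequence for Ψ (i.e. {Ψ(w_n)} is bounded and ‖Ψ'(w_n)‖ → 0, where ‖Ψ'(w)‖ = sup{|Ψ'(w)z| : z ∈ T_wS, ‖z‖ = 1}), then {m(w_n)} is a Palais–Smale sequence for Φ ({Φ(m(w_n))} is bounded and ‖Φ'(m(w_n))‖ → 0 in the dual norm). (ii) If {u_n} ⊂ N is a bounded Palais–Smale sequence for Φ, then {u_n/‖u_n‖} is a Palais–Smale sequence for Ψ. -/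

import Mathlib

open scoped ENNReal

noncomputable section

/-- `H¹(V)`: as a set, the ℓ²-summable real functions on the vertex set;
the `H¹` norm is equivalent to the ℓ² norm by the uniform degree bound. -/
abbrev H1 (Vtx : Type*) := lp (fun _ : Vtx => ℝ) 2

variable {Vtx : Type*}

/-- `Γ(u,v)(x) = (1/2) Σ_{y∼x} (u(y)-u(x))(v(y)-v(x))`. -/
def gammaProd (adj : Vtx → Vtx → Prop) (u v : Vtx → ℝ) (x : Vtx) : ℝ :=
  (1/2) * ∑' y : {y : Vtx // adj x y}, (u y.1 - u x) * (v y.1 - v x)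

/-- `|∇u|²(x) = (1/2) Σ_{y∼x} (u(y)-u(x))²`. -/
def gradSq (adj : Vtx → Vtx → Prop) (u : Vtx → ℝ) (x : Vtx) : ℝ :=
  gammaProd adj u u x

/-- `Δu(x) = Σ_{y∼x} (u(y)-u(x))`. -/
def graphLap (adj : Vtx → Vtx → Prop) (u : Vtx → ℝ) (x : Vtx) : ℝ :=
  ∑' y : {y : Vtx // adj x y}, (u y.1 - u x)

/-- the norm `‖u‖` induced by the potential `V`:
`‖u‖² = Σ_x (|∇u|²(x) + V(x)u(x)²)`. -/
def nrmV (adj : Vtx → Vtx → Prop) (Vp : Vtx → ℝ) (u : Vtx → ℝ) : ℝ :=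
  Real.sqrt (∑' x, (gradSq adj u x + Vp x * (u x)^2))

/-- the `V`-norm of an element of `H¹`. -/
def nrmH (adj : Vtx → Vtx → Prop) (Vp : Vtx → ℝ) (u : H1 Vtx) : ℝ :=
  nrmV adj Vp (fun y => u y)

/-- `⟨u,v⟩ = Σ_x (Γ(u,v)(x) + V(x)u(x)v(x))`. -/
def iprodH (adj : Vtx → Vtx → Prop) (Vp : Vtx → ℝ) (u v : H1 Vtx) : ℝ :=
  ∑' x, (gammaProd adj (fun y => u y) (fun y => v y) x + Vp x * u x * v x)

/-- the variational functional `Φ(u) = ½‖u‖² − Σ_x F(x,u(x))`. -/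
def PhiF (adj : Vtx → Vtx → Prop) (Vp : Vtx → ℝ) (F : Vtx → ℝ → ℝ) (u : H1 Vtx) : ℝ :=
  (1/2) * ∑' x, (gradSq adj (fun y => u y) x + Vp x * (u x)^2) - ∑' x, F x (u x)

/-- the Nehari manifold `N = {u ∈ H¹\{0} : Φ'(u)u = 0}`. -/
def Nehari (adj : Vtx → Vtx → Prop) (Vp : Vtx → ℝ) (F : Vtx → ℝ → ℝ) : Set (H1 Vtx) :=
  {u | u ≠ 0 ∧ fderiv ℝ (PhiF adj Vp F) u u = 0}

/-- adjacency of the lattice graph `ℤ^N`. -/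
def adjZ (N : ℕ) (x y : Fin N → ℤ) : Prop := (∑ i, (x i - y i).natAbs) = 1

end

section AbstractNehari

variable {E : Type*} [NormedAddCommGroup E] [NormedSpace ℝ E]

lemma ray_hasDerivAt {P : E → ℝ} (hP : ∀ u, HasStrictFDerivAt P (fderiv ℝ P u) u) (w : E) (s : ℝ) :
    HasDerivAt (fun s : ℝ => P (s • w)) (fderiv ℝ P (s • w) w) s := by
  have h1 : HasDerivAt (fun s : ℝ => s • w) w s := by
    simpa using (hasDerivAt_id s).smul_const w
  exact (hP (s • w)).hasFDerivAt.comp_hasDerivAt s h1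

lemma ray_sign {P : E → ℝ}
    (hanti : ∀ w : E, w ≠ 0 → AntitoneOn (fun s : ℝ => fderiv ℝ P (s • w) w / s) (Set.Ioi 0))
    {sw : E → ℝ}
    (hsw : ∀ w : E, w ≠ 0 → 0 < sw w ∧ fderiv ℝ P (sw w • w) (sw w • w) = 0 ∧
      ∀ s : ℝ, 0 < s → fderiv ℝ P (s • w) (s • w) = 0 → s = sw w)
    {w : E} (hw : w ≠ 0) :
    fderiv ℝ P (sw w • w) w = 0 ∧
    (∀ s, 0 < s → s < sw w → 0 < fderiv ℝ P (s • w) w) ∧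
    (∀ s, sw w < s → fderiv ℝ P (s • w) w < 0) := by
  obtain ⟨h0, h1, h2⟩ := hsw w hw
  have e0 : fderiv ℝ P (sw w • w) w = 0 := by
    rw [map_smul, smul_eq_mul] at h1
    rcases mul_eq_zero.1 h1 with h | h
    · exact absurd h h0.ne'
    · exact h
  have hne : ∀ s, 0 < s → s ≠ sw w → fderiv ℝ P (s • w) w ≠ 0 := by
    intro s hs hsne h
    apply hsne
    apply h2 s hs
    rw [map_smul, h, smul_zero]
  refine ⟨e0, ?_, ?_⟩
  · intro s hs hlt
    have := hanti w hw (Set.mem_Ioi.2 hs) (Set.mem_Ioi.2 h0) hlt.le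
    simp only [e0, zero_div] at this
    have h3 : 0 ≤ fderiv ℝ P (s • w) w := by
      have := mul_nonneg this hs.le
      rwa [div_mul_cancel₀ _ hs.ne'] at this
    exact lt_of_le_of_ne h3 (hne s hs hlt.ne).symm
  · intro s hlt
    have hs : 0 < s := h0.trans hlt
    have := hanti w hw (Set.mem_Ioi.2 h0) (Set.mem_Ioi.2 hs) hlt.le
    simp only [e0, zero_div] at this
    have h3 : fderiv ℝ P (s • w) w ≤ 0 := by
      have := mul_nonpos_of_nonpos_of_nonneg this hs.le
      rwa [div_mul_cancel₀ _ hs.ne'] at this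
    exact lt_of_le_of_ne h3 (hne s hs hlt.ne')

lemma ray_mono {P : E → ℝ} (hP : ∀ u, HasStrictFDerivAt P (fderiv ℝ P u) u)
    (hanti : ∀ w : E, w ≠ 0 → AntitoneOn (fun s : ℝ => fderiv ℝ P (s • w) w / s) (Set.Ioi 0))
    {sw : E → ℝ}
    (hsw : ∀ w : E, w ≠ 0 → 0 < sw w ∧ fderiv ℝ P (sw w • w) (sw w • w) = 0 ∧
      ∀ s : ℝ, 0 < s → fderiv ℝ P (s • w) (s • w) = 0 → s = sw w)
    {w : E} (hw : w ≠ 0) :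
    StrictMonoOn (fun s : ℝ => P (s • w)) (Set.Icc 0 (sw w)) ∧
    StrictAntiOn (fun s : ℝ => P (s • w)) (Set.Ici (sw w)) := by
  obtain ⟨e0, h1, h2⟩ := ray_sign hanti hsw hw
  have hc : Continuous (fun s : ℝ => P (s • w)) :=
    continuous_iff_continuousAt.2 fun s => (ray_hasDerivAt hP w s).continuousAt
  constructor
  · apply strictMonoOn_of_deriv_pos (convex_Icc _ _) hc.continuousOn
    intro s hs
    rw [interior_Icc] at hs
    rw [(ray_hasDerivAt hP w s).deriv]
    exact h1 s hs.1 hs.2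
  · apply strictAntiOn_of_deriv_neg (convex_Ici _) hc.continuousOn
    intro s hs
    rw [interior_Ici] at hs
    rw [(ray_hasDerivAt hP w s).deriv]
    exact h2 s hs

lemma ray_max {P : E → ℝ} (hP : ∀ u, HasStrictFDerivAt P (fderiv ℝ P u) u)
    (hanti : ∀ w : E, w ≠ 0 → AntitoneOn (fun s : ℝ => fderiv ℝ P (s • w) w / s) (Set.Ioi 0))
    {sw : E → ℝ}
    (hsw : ∀ w : E, w ≠ 0 → 0 < sw w ∧ fderiv ℝ P (sw w • w) (sw w • w) = 0 ∧
      ∀ s : ℝ, 0 < s → fderiv ℝ P (s • w) (s • w) = 0 → s = sw w)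
    {w : E} (hw : w ≠ 0) (s : ℝ) (hs : 0 < s) : P (s • w) ≤ P (sw w • w) := by
  obtain ⟨h1, h2⟩ := ray_mono hP hanti hsw hw
  have h0 := (hsw w hw).1
  rcases le_total s (sw w) with h | h
  · exact h1.monotoneOn ⟨hs.le, h⟩ ⟨h0.le, le_rfl⟩ h
  · exact h2.antitoneOn (Set.mem_Ici.2 le_rfl) (Set.mem_Ici.2 h) h

lemma sw_continuousAt {P : E → ℝ} (hP : ∀ u, HasStrictFDerivAt P (fderiv ℝ P u) u)
    (hanti : ∀ w : E, w ≠ 0 → AntitoneOn (fun s : ℝ => fderiv ℝ P (s • w) w / s) (Set.Ioi 0))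
    {sw : E → ℝ}
    (hsw : ∀ w : E, w ≠ 0 → 0 < sw w ∧ fderiv ℝ P (sw w • w) (sw w • w) = 0 ∧
      ∀ s : ℝ, 0 < s → fderiv ℝ P (s • w) (s • w) = 0 → s = sw w)
    {w : E} (hw : w ≠ 0) : ContinuousAt sw w := by
  have h0 := (hsw w hw).1
  have hPc : Continuous P := continuous_iff_continuousAt.2 fun u => (hP u).continuousAt
  have hc : ∀ s : ℝ, Continuous (fun v : E => P (s • v)) := fun s =>
    hPc.comp (continuous_const_smul s)
  obtain ⟨m1, m2⟩ := ray_mono hP hanti hsw hw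
  rw [ContinuousAt, tendsto_order]
  constructor
  · intro b hb
    set s1 := max b 0 with hs1
    have hs1' : s1 < sw w := max_lt hb h0
    have hs10 : 0 ≤ s1 := le_max_right _ _
    have hlt : P (s1 • w) < P (sw w • w) := m1 ⟨hs10, hs1'.le⟩ ⟨h0.le, le_rfl⟩ hs1'
    have hev := (hc s1).continuousAt.eventually_lt (hc (sw w)).continuousAt hlt
    filter_upwards [hev, isOpen_ne.mem_nhds hw] with v hv hv0
    obtain ⟨_, n2⟩ := ray_mono hP hanti hsw hv0
    by_contra hcon
    push Not at hcon
    have : sw v ≤ s1 := hcon.trans (le_max_left _ _)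
    have := n2 (Set.mem_Ici.2 this) (Set.mem_Ici.2 (this.trans hs1'.le)) hs1'
    exact absurd hv (not_lt.2 this.le)
  · intro b hb
    have hlt : P (b • w) < P (sw w • w) := m2 (Set.mem_Ici.2 le_rfl) (Set.mem_Ici.2 hb.le) hb
    have hev := (hc b).continuousAt.eventually_lt (hc (sw w)).continuousAt hlt
    filter_upwards [hev, isOpen_ne.mem_nhds hw] with v hv hv0
    obtain ⟨n1, _⟩ := ray_mono hP hanti hsw hv0
    by_contra hcon
    push Not at hcon
    have := n1 ⟨h0.le, hb.le.trans hcon⟩ ⟨h0.le.trans hb.le, hcon⟩ hb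
    exact absurd hv (not_lt.2 this.le)

lemma psi_hasFDerivAt {P : E → ℝ} (hP : ∀ u, HasStrictFDerivAt P (fderiv ℝ P u) u)
    (hanti : ∀ w : E, w ≠ 0 → AntitoneOn (fun s : ℝ => fderiv ℝ P (s • w) w / s) (Set.Ioi 0))
    {sw : E → ℝ}
    (hsw : ∀ w : E, w ≠ 0 → 0 < sw w ∧ fderiv ℝ P (sw w • w) (sw w • w) = 0 ∧
      ∀ s : ℝ, 0 < s → fderiv ℝ P (s • w) (s • w) = 0 → s = sw w)
    {w : E} (hw : w ≠ 0) :
    HasFDerivAt (fun v => P (sw v • v)) (sw w • fderiv ℝ P (sw w • w)) w := by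
  have h0 := (hsw w hw).1
  have hsc := sw_continuousAt hP hanti hsw hw
  set L := fderiv ℝ P (sw w • w) with hL
  rw [hasFDerivAt_iff_isLittleO, Asymptotics.isLittleO_iff]
  intro c hc
  have hst := hasStrictFDerivAt_iff_isLittleO.1 (hP (sw w • w))
  rw [Asymptotics.isLittleO_iff] at hst
  set K : ℝ := sw w + 1 + ‖L‖ with hK
  have hKpos : 0 < K := by positivity
  set c' := min (c / K) 1 with hc'
  have hc'pos : 0 < c' := by positivity
  have hc'K : c' * K ≤ c := by
    calc c' * K ≤ (c / K) * K := by gcongr; exact min_le_left _ _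
      _ = c := by field_simp
  have hst' := hst hc'pos
  -- two maps
  have t1 : Filter.Tendsto (fun v => (sw w • v, sw w • w)) (nhds w)
      (nhds (sw w • w, sw w • w)) := by
    apply ContinuousAt.tendsto (f := fun v => (sw w • v, sw w • w))
    fun_prop
  have t2 : Filter.Tendsto (fun v => (sw v • v, sw v • w)) (nhds w)
      (nhds (sw w • w, sw w • w)) := by
    apply ContinuousAt.tendsto (f := fun v => (sw v • v, sw v • w))
    exact (hsc.smul continuousAt_id).prodMk (hsc.smul continuousAt_const)
  have hclose : ∀ᶠ v in nhds w, |sw v - sw w| < c' := by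
    have := Metric.tendsto_nhds.1 hsc c' hc'pos
    simpa [Real.dist_eq] using this
  filter_upwards [t1.eventually hst', t2.eventually hst', hclose, isOpen_ne.mem_nhds hw]
    with v a1 a2 a3 hv
  have hv0 := (hsw v hv).1
  have l1 : P (sw w • v) ≤ P (sw v • v) := ray_max hP hanti hsw hv _ h0
  have l2 : P (sw v • w) ≤ P (sw w • w) := ray_max hP hanti hsw hw _ hv0
  rw [← smul_sub, map_smul, norm_smul, Real.norm_eq_abs, Real.norm_eq_abs, smul_eq_mul] at a1 a2
  rw [abs_of_pos h0] at a1
  rw [abs_of_pos hv0] at a2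
  rw [Real.norm_eq_abs, smul_apply, smul_eq_mul]
  have hLb : |L (v - w)| ≤ ‖L‖ * ‖v - w‖ := by
    simpa using L.le_opNorm (v - w)
  have hd : |(sw v - sw w) * L (v - w)| ≤ c' * (‖L‖ * ‖v - w‖) := by
    rw [abs_mul]; gcongr
  have hsv : sw v ≤ sw w + 1 := by
    have := (abs_lt.1 a3).2
    have : c' ≤ 1 := min_le_right _ _
    linarith
  have b2 : c' * (sw v * ‖v - w‖) ≤ c' * ((sw w + 1) * ‖v - w‖) := by gcongr
  have b3 : (c' * K) * ‖v - w‖ ≤ c * ‖v - w‖ := by gcongr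
  have b4 : 0 ≤ c' * ‖v - w‖ := by positivity
  have b5 : 0 ≤ c' * (‖L‖ * ‖v - w‖) := by positivity
  rw [abs_le] at *
  rw [hK] at b3
  constructor <;> nlinarith
end AbstractNehari

section Nemytskii

variable {Vtx : Type*}

lemma h1_mem_of_bound (g : Vtx → ℝ) (K : ℝ) (u : H1 Vtx) (h : ∀ x, |g x| ≤ K * |u x|) :
    Memℓp g 2 := by
  have hu : Summable fun x => ‖u x‖ ^ (2 : ℝ≥0∞).toReal := (lp.memℓp u).summable (by simp)
  apply memℓp_gen
  refine Summable.of_nonneg_of_le (fun x => by positivity) (fun x => ?_) (hu.mul_left (K ^ 2))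
  simp only [ENNReal.toReal_ofNat, Real.rpow_ofNat, Real.norm_eq_abs, ← mul_pow]
  exact pow_le_pow_left₀ (abs_nonneg _) (h x) 2

lemma h1_norm_sq (u : H1 Vtx) : HasSum (fun x => (u x) ^ 2) (‖u‖ ^ 2) := by
  have := lp.hasSum_inner (𝕜 := ℝ) u u
  rw [real_inner_self_eq_norm_sq] at this
  simpa [sq] using this

lemma h1_abs_mul (u v : H1 Vtx) :
    Summable (fun x => |u x| * |v x|) ∧ ∑' x, |u x| * |v x| ≤ ‖u‖ * ‖v‖ := by
  have key : ∀ u : H1 Vtx, ∃ u' : H1 Vtx, (∀ x, u' x = |u x|) ∧ ‖u'‖ = ‖u‖ := by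
    intro u
    refine ⟨⟨fun x => |u x|, h1_mem_of_bound _ 1 u (by simp)⟩, fun x => rfl, ?_⟩
    set u' : H1 Vtx := ⟨fun x => |u x|, h1_mem_of_bound _ 1 u (by simp)⟩ with hu'
    have h1 := h1_norm_sq u'
    have h2 := h1_norm_sq u
    have : (fun x => (u' x) ^ 2) = fun x => (u x) ^ 2 := by
      funext x
      exact sq_abs _
    rw [this] at h1
    exact (sq_eq_sq₀ (norm_nonneg _) (norm_nonneg _)).1 (h1.unique h2)
  obtain ⟨u', hu, hun⟩ := key u
  obtain ⟨v', hv, hvn⟩ := key v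
  have := lp.hasSum_inner (𝕜 := ℝ) u' v'
  have e : (fun x => inner ℝ (u' x) (v' x)) = fun x => |u x| * |v x| := by
    funext x
    rw [hu, hv]
    simp [mul_comm]
  rw [e] at this
  refine ⟨this.summable, ?_⟩
  rw [this.tsum_eq, ← hun, ← hvn]
  exact real_inner_le_norm _ _

lemma h1_abs_le (u : H1 Vtx) (x : Vtx) : |u x| ≤ ‖u‖ := by
  simpa using lp.norm_apply_le_norm (p := 2) (by simp) u x

lemma growth_lin {f : Vtx → ℝ → ℝ} {a q : ℝ} (ha : 0 < a) (hq : 2 < q)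
    (hgrowth : ∀ x t, |f x t| ≤ a * (|t| + |t| ^ (q - 1))) (R : ℝ) :
    ∃ K : ℝ, 0 ≤ K ∧ ∀ x t, |t| ≤ R → |f x t| ≤ K * |t| := by
  refine ⟨a * (1 + |R| ^ (q - 2)), by positivity, ?_⟩
  intro x t ht
  refine (hgrowth x t).trans ?_
  have h1 : |t| ^ (q - 1) = |t| ^ (q - 2) * |t| := by
    rcases eq_or_ne (|t|) 0 with h | h
    · rw [h, Real.zero_rpow (by linarith)]; simp
    · rw [← Real.rpow_add_one h]; congr 1; ring
  have h2 : |t| ^ (q - 2) ≤ |R| ^ (q - 2) :=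
    Real.rpow_le_rpow (abs_nonneg _) (ht.trans (le_abs_self _)) (by linarith)
  rw [h1]
  have := mul_le_mul_of_nonneg_right h2 (abs_nonneg t)
  nlinarith

lemma F_hasDerivAt {f F : Vtx → ℝ → ℝ} (hcont : ∀ x, Continuous (f x))
    (hF : ∀ x t, F x t = ∫ s in (0:ℝ)..t, f x s) (x : Vtx) (t : ℝ) :
    HasDerivAt (F x) (f x t) t := by
  have : F x = fun t => ∫ s in (0:ℝ)..t, f x s := funext (hF x)
  rw [this]
  exact intervalIntegral.integral_hasDerivAt_right ((hcont x).intervalIntegrable _ _)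
    ((hcont x).stronglyMeasurableAtFilter _ _) (hcont x).continuousAt

/-- mean value theorem -/
lemma F_mvt {f F : Vtx → ℝ → ℝ} (hcont : ∀ x, Continuous (f x))
    (hF : ∀ x t, F x t = ∫ s in (0:ℝ)..t, f x s) (x : Vtx) (s t : ℝ) :
    ∃ ξ ∈ Set.uIcc s t, F x t - F x s = f x ξ * (t - s) := by
  have hd := F_hasDerivAt hcont hF x
  have hc : Continuous (F x) := continuous_iff_continuousAt.2 fun s => (hd s).continuousAt
  rcases lt_trichotomy s t with h | h | h
  · obtain ⟨c, hc1, hc2⟩ := exists_hasDerivAt_eq_slope (F x) (f x) h hc.continuousOn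
      (fun y _ => hd y)
    refine ⟨c, Set.Icc_subset_uIcc (Set.Ioo_subset_Icc_self hc1), ?_⟩
    rw [hc2, div_mul_cancel₀]
    exact (sub_pos.2 h).ne'
  · subst h; exact ⟨s, by simp, by simp⟩
  · obtain ⟨c, hc1, hc2⟩ := exists_hasDerivAt_eq_slope (F x) (f x) h hc.continuousOn
      (fun y _ => hd y)
    refine ⟨c, Set.Icc_subset_uIcc' (Set.Ioo_subset_Icc_self hc1), ?_⟩
    have : s - t ≠ 0 := (sub_pos.2 h).ne'
    rw [hc2]
    field_simp
    ring

lemma uIcc_abs_le {s t ξ : ℝ} (h : ξ ∈ Set.uIcc s t) : |ξ| ≤ max |s| |t| := by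
  rcases Set.mem_uIcc.1 h with ⟨h1, h2⟩ | ⟨h1, h2⟩
  · exact abs_le_max_abs_abs h1 h2
  · rw [max_comm]; exact abs_le_max_abs_abs h1 h2

lemma F_summable {f F : Vtx → ℝ → ℝ} {a q : ℝ} (ha : 0 < a) (hq : 2 < q)
    (hcont : ∀ x, Continuous (f x))
    (hgrowth : ∀ x t, |f x t| ≤ a * (|t| + |t| ^ (q - 1)))
    (hF : ∀ x t, F x t = ∫ s in (0:ℝ)..t, f x s) (u : H1 Vtx) :
    Summable fun x => F x (u x) := by
  obtain ⟨K, hK, hKb⟩ := growth_lin ha hq hgrowth ‖u‖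
  refine Summable.of_norm_bounded ((h1_norm_sq u).summable.mul_left K) fun x => ?_
  obtain ⟨ξ, hξ, he⟩ := F_mvt hcont hF x 0 (u x)
  have h0 : F x 0 = 0 := by rw [hF]; simp
  have hξ' : |ξ| ≤ |u x| := by simpa using uIcc_abs_le hξ
  rw [h0, sub_zero, sub_zero] at he
  rw [he, Real.norm_eq_abs, abs_mul, ← sq_abs (u x), sq, ← mul_assoc]
  gcongr
  refine (hKb x ξ (hξ'.trans (h1_abs_le u x))).trans ?_
  gcongr

/-- the Nemytskii image as an element of ℓ² -/
lemma exists_nem {f : Vtx → ℝ → ℝ} {a q : ℝ} (ha : 0 < a) (hq : 2 < q)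
    (hgrowth : ∀ x t, |f x t| ≤ a * (|t| + |t| ^ (q - 1))) (u : H1 Vtx) :
    ∃ g : H1 Vtx, ∀ x, g x = f x (u x) := by
  obtain ⟨K, hK, hKb⟩ := growth_lin ha hq hgrowth ‖u‖
  exact ⟨⟨fun x => f x (u x), h1_mem_of_bound _ K u fun x => hKb x _ (h1_abs_le u x)⟩, fun x => rfl⟩

lemma J_hasStrictFDerivAt {f F : Vtx → ℝ → ℝ} {a q : ℝ} (ha : 0 < a) (hq : 2 < q)
    (hcont : ∀ x, Continuous (f x))
    (hgrowth : ∀ x t, |f x t| ≤ a * (|t| + |t| ^ (q - 1)))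
    (hsmall : ∀ ε > 0, ∃ δ > 0, ∀ x t, t ≠ 0 → |t| < δ → |f x t| ≤ ε * |t|)
    (hF : ∀ x t, F x t = ∫ s in (0:ℝ)..t, f x s) (u g : H1 Vtx) (hg : ∀ x, g x = f x (u x)) :
    HasStrictFDerivAt (fun v : H1 Vtx => ∑' x, F x (v x)) (innerSL ℝ g) u := by
  classical
  rw [hasStrictFDerivAt_iff_isLittleO, Asymptotics.isLittleO_iff]
  intro c hc
  set ε : ℝ := c / (2 * (3 * ‖u‖ + 2)) with hε
  have hεpos : 0 < ε := by positivity
  obtain ⟨δ, hδ, hsm⟩ := hsmall ε hεpos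
  have hsm' : ∀ x t, |t| < δ → |f x t| ≤ ε * |t| := by
    intro x t ht
    rcases eq_or_ne t 0 with h | h
    · subst h
      have := hgrowth x 0
      simpa [Real.zero_rpow (show q - 1 ≠ 0 by linarith)] using this
    · exact hsm x t h ht
  -- finite exceptional set
  have hfinA : {x | ¬ |u x| < δ / 2}.Finite := by
    have h1 := (h1_norm_sq u).summable.tendsto_cofinite_zero
    have h2 := h1.eventually_lt_const (show (0:ℝ) < (δ / 2) ^ 2 by positivity)
    rw [Filter.eventually_cofinite] at h2
    refine h2.subset fun x hx hx2 => hx ?_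
    exact abs_lt_of_sq_lt_sq hx2 (by positivity)
  set A := hfinA.toFinset with hA
  have hAmem : ∀ x, x ∉ A → |u x| < δ / 2 := by
    intro x hx
    by_contra h
    exact hx (by simpa [hA] using h)
  set η : ℝ := c / (2 * ((A.card : ℝ) + 1)) with hη
  have hηpos : 0 < η := by positivity
  have hloc : ∀ x ∈ A, ∀ᶠ p : H1 Vtx × H1 Vtx in nhds (u, u),
      ∀ ξ ∈ Set.uIcc (p.2 x) (p.1 x), |f x ξ - f x (u x)| ≤ η := by
    intro x _
    obtain ⟨r, hr, hrb⟩ := Metric.continuousAt_iff.1 ((hcont x).continuousAt (x := u x)) η hηpos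
    have : Metric.ball (u, u) r ∈ nhds ((u, u) : H1 Vtx × H1 Vtx) := Metric.ball_mem_nhds _ hr
    filter_upwards [this] with p hp ξ hξ
    rw [Metric.mem_ball, Prod.dist_eq, max_lt_iff, dist_eq_norm, dist_eq_norm] at hp
    have h1 : |p.1 x - u x| < r := (h1_abs_le (p.1 - u) x).trans_lt hp.1
    have h2 : |p.2 x - u x| < r := (h1_abs_le (p.2 - u) x).trans_lt hp.2
    have h3 : |ξ - u x| < r := by
      rw [abs_lt] at *
      rcases Set.mem_uIcc.1 hξ with ⟨h3, h4⟩ | ⟨h3, h4⟩ <;> constructor <;> linarith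
    exact (hrb (x := ξ) h3).le
  have hnear : Metric.ball (u, u) (min (δ / 2) 1) ∈ nhds ((u, u) : H1 Vtx × H1 Vtx) :=
    Metric.ball_mem_nhds _ (by positivity)
  filter_upwards [(Filter.eventually_all_finset A).2 hloc, hnear] with p hp hball
  rw [Metric.mem_ball, Prod.dist_eq, max_lt_iff, dist_eq_norm, dist_eq_norm] at hball
  obtain ⟨b1, b2⟩ := hball
  have hpt : ∀ x, |F x (p.1 x) - F x (p.2 x) - g x * (p.1 - p.2) x| ≤
      ε * (|p.1 x| * |(p.1 - p.2) x| + |p.2 x| * |(p.1 - p.2) x| + |u x| * |(p.1 - p.2) x|)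
        + (if x ∈ A then η * |(p.1 - p.2) x| else 0) := by
    intro x
    obtain ⟨ξ, hξ, he⟩ := F_mvt hcont hF x (p.2 x) (p.1 x)
    have hsub : (p.1 - p.2) x = p.1 x - p.2 x := rfl
    rw [hsub, he, hg, ← sub_mul, abs_mul]
    by_cases hx : x ∈ A
    · rw [if_pos hx]
      have := mul_le_mul_of_nonneg_right (hp x hx ξ hξ) (abs_nonneg (p.1 x - p.2 x))
      have : 0 ≤ ε * (|p.1 x| * |p.1 x - p.2 x| + |p.2 x| * |p.1 x - p.2 x| +
        |u x| * |p.1 x - p.2 x|) := by positivity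
      linarith
    · rw [if_neg hx, add_zero]
      have hu := hAmem x hx
      have h1 : |p.1 x - u x| < δ / 2 :=
        (h1_abs_le (p.1 - u) x).trans_lt (b1.trans_le (min_le_left _ _))
      have h2 : |p.2 x - u x| < δ / 2 :=
        (h1_abs_le (p.2 - u) x).trans_lt (b2.trans_le (min_le_left _ _))
      have h1' : |p.1 x| < δ := by
        have := abs_add_le (p.1 x - u x) (u x); rw [sub_add_cancel] at this; linarith
      have h2' : |p.2 x| < δ := by
        have := abs_add_le (p.2 x - u x) (u x); rw [sub_add_cancel] at this; linarith
      have hξm := uIcc_abs_le hξ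
      have hξ1 : |ξ| < δ := hξm.trans_lt (max_lt h2' h1')
      have hξ2 : |ξ| ≤ |p.1 x| + |p.2 x| := hξm.trans
        (max_le (by linarith [abs_nonneg (p.1 x)]) (by linarith [abs_nonneg (p.2 x)]))
      have e1 := hsm' x ξ hξ1
      have e2 := hsm' x (u x) (by linarith)
      have e3 : |f x ξ - f x (u x)| ≤ ε * (|p.1 x| + |p.2 x| + |u x|) := by
        refine (abs_sub _ _).trans ?_
        have := mul_le_mul_of_nonneg_left hξ2 hεpos.le
        linarith
      calc _ ≤ ε * (|p.1 x| + |p.2 x| + |u x|) * |p.1 x - p.2 x| := by gcongr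
        _ = _ := by ring
  set h := p.1 - p.2 with hh
  obtain ⟨s1, t1⟩ := h1_abs_mul p.1 h
  obtain ⟨s2, t2⟩ := h1_abs_mul p.2 h
  obtain ⟨s3, t3⟩ := h1_abs_mul u h
  have sA : HasSum (fun x => if x ∈ A then η * |h x| else 0) (∑ x ∈ A, η * |h x|) := by
    have : HasSum (fun x => if x ∈ A then η * |h x| else 0)
        (∑ x ∈ A, if x ∈ A then η * |h x| else 0) :=
      hasSum_sum_of_ne_finset_zero (fun x hx => by simp [hx])
    rwa [Finset.sum_congr rfl (fun x hx => if_pos hx)] at this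
  have hsum := ((s1.hasSum.add s2.hasSum).add s3.hasSum).mul_left ε |>.add sA
  have hdiff : HasSum (fun x => F x (p.1 x) - F x (p.2 x) - g x * h x)
      (∑' x, F x (p.1 x) - ∑' x, F x (p.2 x) - innerSL ℝ g h) := by
    refine ((F_summable ha hq hcont hgrowth hF p.1).hasSum.sub
      (F_summable ha hq hcont hgrowth hF p.2).hasSum).sub ?_
    have := lp.hasSum_inner (𝕜 := ℝ) g h
    simpa [mul_comm] using this
  have hle := tsum_of_norm_bounded (f := fun x => F x (p.1 x) - F x (p.2 x) - g x * h x) hsum hpt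
  rw [hdiff.tsum_eq] at hle
  refine hle.trans ?_
  have n1 : ‖p.1‖ ≤ ‖u‖ + 1 := by
    have := norm_add_le (p.1 - u) u; rw [sub_add_cancel] at this
    have := b1.trans_le (min_le_right _ _); linarith
  have n2 : ‖p.2‖ ≤ ‖u‖ + 1 := by
    have := norm_add_le (p.2 - u) u; rw [sub_add_cancel] at this
    have := b2.trans_le (min_le_right _ _); linarith
  have i1 : ε * (∑' x, |p.1 x| * |h x| + ∑' x, |p.2 x| * |h x| + ∑' x, |u x| * |h x|)
      ≤ c / 2 * ‖h‖ := by
    calc _ ≤ ε * ((‖u‖ + 1) * ‖h‖ + (‖u‖ + 1) * ‖h‖ + ‖u‖ * ‖h‖) := by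
          gcongr
          · exact t1.trans (by gcongr)
          · exact t2.trans (by gcongr)
      _ = c / 2 * ‖h‖ := by
          rw [hε]; field_simp; ring
  have i2 : ∑ x ∈ A, η * |h x| ≤ c / 2 * ‖h‖ := by
    calc _ ≤ ∑ x ∈ A, η * ‖h‖ := by
          apply Finset.sum_le_sum; intro x _; gcongr; exact h1_abs_le h x
      _ = (A.card * η) * ‖h‖ := by simp [mul_assoc]
      _ ≤ c / 2 * ‖h‖ := by
          gcongr
          rw [hη, mul_div_assoc', div_le_div_iff₀ (by positivity) (by positivity)]
          nlinarith
  linarith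

end Nemytskii

section QuadraticForm

variable {Vtx : Type*}

lemma edge_sum_left {adj : Vtx → Vtx → Prop} {D : ℕ}
    (hfin : ∀ x, {y | adj x y}.Finite) (hdeg : ∀ x, {y | adj x y}.ncard ≤ D) (u : H1 Vtx) :
    Summable (fun p : (x : Vtx) × {y : Vtx // adj x y} => (u p.1) ^ 2) ∧
    ∑' p : (x : Vtx) × {y : Vtx // adj x y}, (u p.1) ^ 2 ≤ D * ‖u‖ ^ 2 := by
  have hF : ∀ x, Finite {y : Vtx // adj x y} := fun x => (hfin x).to_subtype
  have hcard : ∀ x, ∑' _y : {y : Vtx // adj x y}, (u x) ^ 2 ≤ D * (u x) ^ 2 := by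
    intro x
    have := hF x
    have := Fintype.ofFinite {y : Vtx // adj x y}
    rw [tsum_fintype, Finset.sum_const, nsmul_eq_mul, Finset.card_univ]
    gcongr
    rw [← Nat.card_eq_fintype_card]
    exact hdeg x
  have hs := (h1_norm_sq u).mul_left (D : ℝ)
  have hin : Summable fun x => ∑' _y : {y : Vtx // adj x y}, (u x) ^ 2 :=
    Summable.of_nonneg_of_le (fun x => tsum_nonneg fun _ => sq_nonneg _) hcard hs.summable
  have hS : Summable (fun p : (x : Vtx) × {y : Vtx // adj x y} => (u p.1) ^ 2) := by
    rw [summable_sigma_of_nonneg (fun p => sq_nonneg _)]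
    refine ⟨fun x => ?_, hin⟩
    have := hF x
    exact Summable.of_finite
  refine ⟨hS, ?_⟩
  rw [hS.tsum_sigma, ← hs.tsum_eq]
  exact hin.tsum_le_tsum hcard hs.summable

lemma edge_sum_right {adj : Vtx → Vtx → Prop} {D : ℕ} (hsym : ∀ x y, adj x y → adj y x)
    (hfin : ∀ x, {y | adj x y}.Finite) (hdeg : ∀ x, {y | adj x y}.ncard ≤ D) (u : H1 Vtx) :
    Summable (fun p : (x : Vtx) × {y : Vtx // adj x y} => (u p.2.1) ^ 2) ∧
    ∑' p : (x : Vtx) × {y : Vtx // adj x y}, (u p.2.1) ^ 2 ≤ D * ‖u‖ ^ 2 := by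
  obtain ⟨e, he⟩ : ∃ e : ((x : Vtx) × {y : Vtx // adj x y}) ≃ ((x : Vtx) × {y : Vtx // adj x y}),
      ∀ p, (e p).1 = p.2.1 :=
    ⟨{ toFun := fun p => ⟨p.2.1, ⟨p.1, hsym _ _ p.2.2⟩⟩
       invFun := fun p => ⟨p.2.1, ⟨p.1, hsym _ _ p.2.2⟩⟩
       left_inv := fun p => rfl
       right_inv := fun p => rfl }, fun p => rfl⟩
  obtain ⟨h1, h2⟩ := edge_sum_left hfin hdeg u
  have h3 : (fun p : (x : Vtx) × {y : Vtx // adj x y} => (u p.2.1) ^ 2) =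
      (fun p : (x : Vtx) × {y : Vtx // adj x y} => (u p.1) ^ 2) ∘ e := by
    funext p
    simp only [Function.comp, he]
  constructor
  · rw [h3]
    exact e.summable_iff.2 h1
  · rw [h3]
    exact (e.tsum_eq (fun p : (x : Vtx) × {y : Vtx // adj x y} => (u p.1) ^ 2)).trans_le h2

lemma edge_diff {adj : Vtx → Vtx → Prop} {D : ℕ} (hsym : ∀ x y, adj x y → adj y x)
    (hfin : ∀ x, {y | adj x y}.Finite) (hdeg : ∀ x, {y | adj x y}.ncard ≤ D) (u : H1 Vtx) :
    Summable (fun p : (x : Vtx) × {y : Vtx // adj x y} => (u p.2.1 - u p.1) ^ 2) ∧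
    ∑' p : (x : Vtx) × {y : Vtx // adj x y}, (u p.2.1 - u p.1) ^ 2 ≤ 4 * D * ‖u‖ ^ 2 := by
  obtain ⟨h1, h2⟩ := edge_sum_left hfin hdeg u
  obtain ⟨h3, h4⟩ := edge_sum_right hsym hfin hdeg u
  have hb : ∀ p : (x : Vtx) × {y : Vtx // adj x y},
      (u p.2.1 - u p.1) ^ 2 ≤ 2 * ((u p.2.1) ^ 2 + (u p.1) ^ 2) := fun p => by
    nlinarith [sq_nonneg (u p.2.1 + u p.1)]
  have hs := (h3.add h1).mul_left 2
  have hS := Summable.of_nonneg_of_le (fun p => sq_nonneg _) hb hs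
  refine ⟨hS, (hS.tsum_le_tsum hb hs).trans ?_⟩
  rw [tsum_mul_left, h3.tsum_add h1]
  linarith

lemma gamma_summable {adj : Vtx → Vtx → Prop} {D : ℕ} (hsym : ∀ x y, adj x y → adj y x)
    (hfin : ∀ x, {y | adj x y}.Finite) (hdeg : ∀ x, {y | adj x y}.ncard ≤ D) (u v : H1 Vtx) :
    Summable (fun x => gammaProd adj (fun y => u y) (fun y => v y) x) := by
  have h1 := (edge_diff hsym hfin hdeg u).1
  have h2 := (edge_diff hsym hfin hdeg v).1
  have : Summable (fun p : (x : Vtx) × {y : Vtx // adj x y} =>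
      (u p.2.1 - u p.1) * (v p.2.1 - v p.1)) := by
    refine Summable.of_norm_bounded (h1.add h2) fun p => ?_
    rw [Real.norm_eq_abs, abs_le]
    constructor <;>
    nlinarith [sq_nonneg ((u p.2.1 - u p.1) + (v p.2.1 - v p.1)),
      sq_nonneg ((u p.2.1 - u p.1) - (v p.2.1 - v p.1))]
  exact this.sigma.mul_left (1 / 2)

lemma pot_summable {Vp : Vtx → ℝ} {C1 C2 : ℝ} (hC1 : 0 < C1)
    (hVbd : ∀ x, C1 ≤ Vp x ∧ Vp x ≤ C2) (u v : H1 Vtx) :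
    Summable (fun x => Vp x * u x * v x) := by
  refine Summable.of_norm_bounded ((h1_abs_mul u v).1.mul_left C2) fun x => ?_
  rw [Real.norm_eq_abs, abs_mul, abs_mul, mul_assoc, abs_of_pos (hC1.trans_le (hVbd x).1)]
  gcongr
  exact (hVbd x).2

lemma exists_form {adj : Vtx → Vtx → Prop} {D : ℕ} (hsym : ∀ x y, adj x y → adj y x)
    (hfin : ∀ x, {y | adj x y}.Finite) (hdeg : ∀ x, {y | adj x y}.ncard ≤ D)
    {Vp : Vtx → ℝ} {C1 C2 : ℝ} (hC1 : 0 < C1) (hVbd : ∀ x, C1 ≤ Vp x ∧ Vp x ≤ C2) :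
    ∃ B : H1 Vtx →L[ℝ] H1 Vtx →L[ℝ] ℝ, (∀ u v, B u v = iprodH adj Vp u v) ∧
      (∀ u v, B u v = B v u) ∧ (∀ u, C1 * ‖u‖ ^ 2 ≤ B u u) ∧
      (∀ u, ∑' x, (gradSq adj (fun y => u y) x + Vp x * (u x) ^ 2) = B u u) ∧
      (∀ u, nrmH adj Vp u = Real.sqrt (B u u)) := by
  have sg := gamma_summable hsym hfin hdeg
  have sp := pot_summable hC1 hVbd
  have fs : ∀ x (g : {y : Vtx // adj x y} → ℝ), Summable g := fun x g => by
    have : Finite {y : Vtx // adj x y} := (hfin x).to_subtype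
    exact Summable.of_finite
  have symm : ∀ u v, iprodH adj Vp u v = iprodH adj Vp v u := by
    intro u v
    simp only [iprodH, gammaProd]
    congr 1; funext x
    congr 1
    · congr 2; funext y; ring
    · ring
  have hadd : ∀ u u' v, iprodH adj Vp (u + u') v = iprodH adj Vp u v + iprodH adj Vp u' v := by
    intro u u' v
    unfold iprodH
    rw [← ((sg u v).add (sp u v)).tsum_add ((sg u' v).add (sp u' v))]
    congr 1; funext x
    have : gammaProd adj (fun y => (u + u') y) (fun y => v y) x =
        gammaProd adj (fun y => u y) (fun y => v y) x +
        gammaProd adj (fun y => u' y) (fun y => v y) x := by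
      unfold gammaProd
      rw [← mul_add, ← (fs x _).tsum_add (fs x _)]
      congr 2; funext y
      simp only [lp.coeFn_add, Pi.add_apply]
      ring
    rw [this]
    simp only [lp.coeFn_add, Pi.add_apply]
    ring
  have hsmul : ∀ (c : ℝ) u v, iprodH adj Vp (c • u) v = c * iprodH adj Vp u v := by
    intro c u v
    unfold iprodH
    rw [← tsum_mul_left]
    congr 1; funext x
    have : gammaProd adj (fun y => (c • u) y) (fun y => v y) x =
        c * gammaProd adj (fun y => u y) (fun y => v y) x := by
      unfold gammaProd
      rw [mul_left_comm, ← tsum_mul_left (a := c)]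
      congr 2; funext y
      simp only [lp.coeFn_smul, Pi.smul_apply, smul_eq_mul]
      ring
    rw [this]
    simp only [lp.coeFn_smul, Pi.smul_apply, smul_eq_mul]
    ring
  let B0 : LinearMap.BilinForm ℝ (H1 Vtx) := LinearMap.mk₂ ℝ (iprodH adj Vp) hadd
    (fun c u v => hsmul c u v)
    (fun u v v' => by rw [symm, hadd, symm v, symm v'])
    (fun c u v => by rw [symm, hsmul, symm v]; rfl)
  have hB0 : ∀ u v, B0 u v = iprodH adj Vp u v := fun u v => rfl
  have hquad : ∀ u : H1 Vtx, ∑' x, (gradSq adj (fun y => u y) x + Vp x * (u x) ^ 2) =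
      iprodH adj Vp u u := by
    intro u
    unfold iprodH gradSq
    congr 1; funext x
    ring
  have hgnn : ∀ (u : H1 Vtx) x, 0 ≤ gammaProd adj (fun y => u y) (fun y => u y) x := by
    intro u x
    unfold gammaProd
    have : 0 ≤ ∑' y : {y : Vtx // adj x y}, (u y.1 - u x) * (u y.1 - u x) :=
      tsum_nonneg (fun y => mul_self_nonneg _)
    exact mul_nonneg (by norm_num) this
  have hlow : ∀ u : H1 Vtx, C1 * ‖u‖ ^ 2 ≤ iprodH adj Vp u u := by
    intro u
    have h := (h1_norm_sq u).mul_left C1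
    rw [← h.tsum_eq]
    refine h.summable.tsum_le_tsum (fun x => ?_) ((sg u u).add (sp u u))
    have h1 := hgnn u x
    have h2 := mul_le_mul_of_nonneg_right (hVbd x).1 (sq_nonneg (u x))
    nlinarith
  have hup : ∀ u : H1 Vtx, iprodH adj Vp u u ≤ (2 * D + |C2|) * ‖u‖ ^ 2 := by
    intro u
    unfold iprodH
    rw [(sg u u).tsum_add (sp u u), add_mul]
    apply add_le_add
    · obtain ⟨h1, h2⟩ := edge_diff hsym hfin hdeg u
      rw [h1.tsum_sigma] at h2
      unfold gammaProd
      rw [tsum_mul_left]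
      simp only [sq] at h2 ⊢
      linarith
    · have h := (h1_norm_sq u).mul_left |C2|
      rw [← h.tsum_eq]
      refine (sp u u).tsum_le_tsum (fun x => ?_) h.summable
      have h2 := mul_le_mul_of_nonneg_right ((hVbd x).2.trans (le_abs_self C2)) (sq_nonneg (u x))
      nlinarith
  have hnn : ∀ u, 0 ≤ B0 u u := fun u => le_trans (by positivity) (hlow u)
  have hK : (0:ℝ) ≤ 2 * D + |C2| := by positivity
  have hbd : ∀ u v, ‖B0 u v‖ ≤ (2 * D + |C2|) * ‖u‖ * ‖v‖ := by
    intro u v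
    have h1 := LinearMap.BilinForm.apply_sq_le_of_symm B0 hnn ⟨fun u v => symm u v⟩ u v
    rw [Real.norm_eq_abs]
    apply abs_le_of_sq_le_sq _ (by positivity)
    calc _ ≤ _ := h1
      _ ≤ ((2 * D + |C2|) * ‖u‖ ^ 2) * ((2 * D + |C2|) * ‖v‖ ^ 2) :=
        mul_le_mul (hup u) (hup v) (hnn v) (by positivity)
      _ = _ := by ring
  refine ⟨LinearMap.mkContinuous₂ B0 _ hbd, fun u v => rfl, fun u v => symm u v, hlow, hquad, ?_⟩
  intro u
  unfold nrmH nrmV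
  rw [hquad u]
  rfl

end QuadraticForm

section MainPieces

variable {Vtx : Type*}

lemma phi_deriv {adj : Vtx → Vtx → Prop} {Vp : Vtx → ℝ}
    {f F : Vtx → ℝ → ℝ} {a q : ℝ} (ha : 0 < a) (hq : 2 < q)
    (hcont : ∀ x, Continuous (f x))
    (hgrowth : ∀ x t, |f x t| ≤ a * (|t| + |t| ^ (q - 1)))
    (hsmall : ∀ ε > 0, ∃ δ > 0, ∀ x t, t ≠ 0 → |t| < δ → |f x t| ≤ ε * |t|)
    (hF : ∀ x t, F x t = ∫ s in (0:ℝ)..t, f x s)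
    (B : H1 Vtx →L[ℝ] H1 Vtx →L[ℝ] ℝ) (hsymB : ∀ u v, B u v = B v u)
    (hquad : ∀ u : H1 Vtx, ∑' x, (gradSq adj (fun y => u y) x + Vp x * (u x) ^ 2) = B u u)
    (u : H1 Vtx) :
    HasStrictFDerivAt (PhiF adj Vp F) (fderiv ℝ (PhiF adj Vp F) u) u ∧
    ∀ v : H1 Vtx, Summable (fun x => f x (u x) * v x) ∧
      fderiv ℝ (PhiF adj Vp F) u v = B u v - ∑' x, f x (u x) * v x := by
  obtain ⟨g, hg⟩ := exists_nem ha hq hgrowth u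
  have hJ := J_hasStrictFDerivAt ha hq hcont hgrowth hsmall hF u g hg
  have hid := hasStrictFDerivAt_id (𝕜 := ℝ) u
  have hQ := (B.isBoundedBilinearMap.hasStrictFDerivAt (u, u)).comp (f := fun v => (id v, id v)) u
    (hid.prodMk hid)
  have hP := (hQ.const_mul (1 / 2)).sub hJ
  have hfun : PhiF adj Vp F = (fun v : H1 Vtx => (1 / 2 : ℝ) * B v v - ∑' x, F x (v x)) := by
    funext v
    unfold PhiF
    rw [hquad v]
  have hP' := hP.congr_of_eventuallyEq (f₁ := PhiF adj Vp F)
    (Filter.Eventually.of_forall fun v => (congrFun hfun v).symm)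
  refine ⟨by rw [hP'.hasFDerivAt.fderiv]; exact hP', ?_⟩
  intro v
  have hs := lp.hasSum_inner (𝕜 := ℝ) g v
  have hs' : HasSum (fun x => f x (u x) * v x) (inner ℝ g v) := by
    simpa [hg, mul_comm] using hs
  refine ⟨hs'.summable, ?_⟩
  rw [hP'.hasFDerivAt.fderiv, hs'.tsum_eq]
  simp [hsymB v u]
  ring

lemma phi_anti {f : Vtx → ℝ → ℝ}
    (hmono : ∀ x, StrictMonoOn (fun t => f x t / |t|) (Set.Iio 0) ∧
             StrictMonoOn (fun t => f x t / |t|) (Set.Ioi 0))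
    (x : Vtx) (t s s' : ℝ) (hs : 0 < s) (hs' : s ≤ s') :
    f x (s * t) * t / s ≤ f x (s' * t) * t / s' := by
  have hs'0 : 0 < s' := hs.trans_le hs'
  have key : ∀ r : ℝ, 0 < r → t ≠ 0 →
      f x (r * t) * t / r = (f x (r * t) / |r * t|) * (|t| * t) := by
    intro r hr ht
    have : |t| ≠ 0 := abs_ne_zero.2 ht
    rw [abs_mul, abs_of_pos hr]
    field_simp
  rcases lt_trichotomy t 0 with ht | ht | ht
  · rw [key s hs ht.ne, key s' hs'0 ht.ne]
    have h1 : f x (s' * t) / |s' * t| ≤ f x (s * t) / |s * t| :=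
      (hmono x).1.monotoneOn (Set.mem_Iio.2 (mul_neg_of_pos_of_neg hs'0 ht))
        (Set.mem_Iio.2 (mul_neg_of_pos_of_neg hs ht)) (by nlinarith)
    exact mul_le_mul_of_nonpos_right h1
      (mul_nonpos_of_nonneg_of_nonpos (abs_nonneg _) ht.le)
  · subst ht; simp
  · rw [key s hs ht.ne', key s' hs'0 ht.ne']
    have h1 : f x (s * t) / |s * t| ≤ f x (s' * t) / |s' * t| :=
      (hmono x).2.monotoneOn (Set.mem_Ioi.2 (mul_pos hs ht))
        (Set.mem_Ioi.2 (mul_pos hs'0 ht)) (by nlinarith)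
    exact mul_le_mul_of_nonneg_right h1 (by positivity)

end MainPieces


/-- Proposition 3.7 (i)-(ii): Palais-Smale sequences for `Ψ = Φ ∘ m` on `S` correspond to
Palais-Smale sequences for `Φ` (dual norms taken with respect to the `V`-norm; tangential
derivative for `Ψ`). -/
theorem stmt14
    {Vtx : Type*} (adj : Vtx → Vtx → Prop) (D : ℕ)
    (hsym : ∀ x y, adj x y → adj y x)
    (hirr : ∀ x, ¬ adj x x)
    (hfin : ∀ x, {y | adj x y}.Finite)
    (hdeg : ∀ x, {y | adj x y}.ncard ≤ D)
    (Vp : Vtx → ℝ) (C1 C2 : ℝ) (hC1 : 0 < C1)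
    (hVbd : ∀ x, C1 ≤ Vp x ∧ Vp x ≤ C2)
    (f : Vtx → ℝ → ℝ) (hcont : ∀ x, Continuous (f x))
    (a q : ℝ) (ha : 0 < a) (hq : 2 < q)
    (hgrowth : ∀ x t, |f x t| ≤ a * (|t| + |t| ^ (q - 1)))
    (hsmall : ∀ ε > 0, ∃ δ > 0, ∀ x t, t ≠ 0 → |t| < δ → |f x t| ≤ ε * |t|)
    (hmono : ∀ x, StrictMonoOn (fun t => f x t / |t|) (Set.Iio 0) ∧
             StrictMonoOn (fun t => f x t / |t|) (Set.Ioi 0))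
    (F : Vtx → ℝ → ℝ) (hF : ∀ x t, F x t = ∫ s in (0:ℝ)..t, f x s)
    (hsuper : ∀ M : ℝ, ∃ R > 0, ∀ x t, R ≤ |t| → M ≤ F x t / t ^ 2)
    (sw : H1 Vtx → ℝ)
    (hsw : ∀ w : H1 Vtx, w ≠ 0 → 0 < sw w ∧
      fderiv ℝ (PhiF adj Vp F) (sw w • w) (sw w • w) = 0 ∧
      ∀ s : ℝ, 0 < s → fderiv ℝ (PhiF adj Vp F) (s • w) (s • w) = 0 → s = sw w)
    :
    (∀ w : ℕ → H1 Vtx, (∀ n, nrmH adj Vp (w n) = 1) →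
      (∃ C : ℝ, ∀ n, |PhiF adj Vp F (sw (w n) • w n)| ≤ C) →
      (∀ ε > 0, ∃ n0 : ℕ, ∀ n ≥ n0, ∀ z : H1 Vtx, iprodH adj Vp (w n) z = 0 →
        |fderiv ℝ (fun v : H1 Vtx => PhiF adj Vp F (sw v • v)) (w n) z| ≤
          ε * nrmH adj Vp z) →
      ((∃ C : ℝ, ∀ n, |PhiF adj Vp F (sw (w n) • w n)| ≤ C) ∧
        (∀ ε > 0, ∃ n0 : ℕ, ∀ n ≥ n0, ∀ z : H1 Vtx,
          |fderiv ℝ (PhiF adj Vp F) (sw (w n) • w n) z| ≤ ε * nrmH adj Vp z))) ∧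
    (∀ u : ℕ → H1 Vtx, (∀ n, u n ∈ Nehari adj Vp F) →
      (∃ C : ℝ, ∀ n, nrmH adj Vp (u n) ≤ C) →
      (∃ C : ℝ, ∀ n, |PhiF adj Vp F (u n)| ≤ C) →
      (∀ ε > 0, ∃ n0 : ℕ, ∀ n ≥ n0, ∀ z : H1 Vtx,
        |fderiv ℝ (PhiF adj Vp F) (u n) z| ≤ ε * nrmH adj Vp z) →
      ((∃ C : ℝ, ∀ n,
          |PhiF adj Vp F (sw ((nrmH adj Vp (u n))⁻¹ • u n) •
            ((nrmH adj Vp (u n))⁻¹ • u n))| ≤ C) ∧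
        (∀ ε > 0, ∃ n0 : ℕ, ∀ n ≥ n0, ∀ z : H1 Vtx,
          iprodH adj Vp ((nrmH adj Vp (u n))⁻¹ • u n) z = 0 →
          |fderiv ℝ (fun v : H1 Vtx => PhiF adj Vp F (sw v • v))
            ((nrmH adj Vp (u n))⁻¹ • u n) z| ≤ ε * nrmH adj Vp z))) := by
  obtain ⟨B, hBi, hBs, hBl, hBq, hBn⟩ := exists_form hsym hfin hdeg hC1 hVbd
  have hph := phi_deriv ha hq hcont hgrowth hsmall hF B hBs hBq
  set P := PhiF adj Vp F with hPdef
  have hP : ∀ u, HasStrictFDerivAt P (fderiv ℝ P u) u := fun u => (hph u).1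
  have hanti : ∀ w : H1 Vtx, w ≠ 0 →
      AntitoneOn (fun s : ℝ => fderiv ℝ P (s • w) w / s) (Set.Ioi 0) := by
    intro w _ s hs s' hs' hss
    rw [Set.mem_Ioi] at hs hs'
    have key : ∀ r : ℝ, 0 < r → Summable (fun x => f x (r * w x) * w x / r) ∧
        fderiv ℝ P (r • w) w / r = B w w - ∑' x, f x (r * w x) * w x / r := by
      intro r hr
      obtain ⟨h1, h2⟩ := (hph (r • w)).2 w
      have h1' : Summable (fun x => f x (r * w x) * w x) := h1
      have h2' : fderiv ℝ P (r • w) w = B (r • w) w - ∑' x, f x (r * w x) * w x := h2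
      refine ⟨h1'.div_const r, ?_⟩
      rw [h2', tsum_div_const, map_smul, smul_apply, smul_eq_mul, sub_div,
        mul_div_cancel_left₀ _ hr.ne']
    obtain ⟨a1, a2⟩ := key s hs
    obtain ⟨b1, b2⟩ := key s' hs'
    simp only [a2, b2]
    apply sub_le_sub_left
    exact a1.tsum_le_tsum (fun x => phi_anti hmono x (w x) s s' hs hss) b1
  have hnn : ∀ u, 0 ≤ B u u := fun u => le_trans (by positivity) (hBl u)
  have hpos : ∀ u : H1 Vtx, u ≠ 0 → 0 < B u u := fun u hu =>
    lt_of_lt_of_le (by have := norm_pos_iff.2 hu; positivity) (hBl u)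
  have hpsi : ∀ w : H1 Vtx, w ≠ 0 → ∀ z,
      fderiv ℝ (fun v : H1 Vtx => P (sw v • v)) w z = sw w * fderiv ℝ P (sw w • w) z := by
    intro w hw z
    rw [(psi_hasFDerivAt hP hanti hsw hw).fderiv]
    rfl
  -- lower bound on the Nehari manifold
  obtain ⟨δ, hδ, hδb⟩ := hsmall (C1 / 2) (by positivity)
  have hlow : ∀ u : H1 Vtx, u ≠ 0 → fderiv ℝ P u u = 0 → δ ≤ ‖u‖ := by
    intro u hu hu0
    by_contra hcon
    push Not at hcon
    obtain ⟨h1, h2⟩ := (hph u).2 u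
    rw [hu0] at h2
    have h3 := (h1_norm_sq u).mul_left (C1 / 2)
    have h4 : ∑' x, f x (u x) * u x ≤ C1 / 2 * ‖u‖ ^ 2 := by
      rw [← h3.tsum_eq]
      refine h1.tsum_le_tsum (fun x => ?_) h3.summable
      rcases eq_or_ne (u x) 0 with h0 | h0
      · simp [h0]
      · have := hδb x (u x) h0 ((h1_abs_le u x).trans_lt hcon)
        calc f x (u x) * u x ≤ |f x (u x)| * |u x| := by
              rw [← abs_mul]; exact le_abs_self _
          _ ≤ C1 / 2 * |u x| * |u x| := by gcongr
          _ = C1 / 2 * (u x) ^ 2 := by rw [mul_assoc, abs_mul_abs_self, sq]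
    have h5 := hBl u
    have h6 : 0 < C1 * ‖u‖ ^ 2 := by have := norm_pos_iff.2 hu; positivity
    linarith
  constructor
  · intro w hw1 hbd hps
    refine ⟨hbd, ?_⟩
    have hB1 : ∀ n, B (w n) (w n) = 1 := by
      intro n
      have := hw1 n
      rw [hBn, Real.sqrt_eq_one] at this
      exact this
    have hw0 : ∀ n, w n ≠ 0 := by
      intro n h
      have := hB1 n
      rw [h] at this
      simp at this
    set σ := δ * Real.sqrt C1 with hσ
    have hσpos : 0 < σ := by positivity
    have hswl : ∀ n, σ ≤ sw (w n) := by
      intro n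
      obtain ⟨s0, s1, _⟩ := hsw (w n) (hw0 n)
      have h1 := hlow _ (smul_ne_zero s0.ne' (hw0 n)) s1
      have h2 := hBl (sw (w n) • w n)
      have h3 : B (sw (w n) • w n) (sw (w n) • w n) = sw (w n) ^ 2 := by
        simp [hB1 n, sq]
      rw [h3] at h2
      apply le_of_sq_le_sq _ s0.le
      rw [hσ, mul_pow, Real.sq_sqrt hC1.le]
      have : δ ^ 2 ≤ ‖sw (w n) • w n‖ ^ 2 := pow_le_pow_left₀ hδ.le h1 2
      nlinarith
    intro ε hε
    obtain ⟨n0, hn0⟩ := hps (ε * σ) (by positivity)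
    refine ⟨n0, fun n hn z => ?_⟩
    have hs0 := (hsw (w n) (hw0 n)).1
    set t := B (w n) z with ht
    set z' := z - t • w n with hz'
    have hBz' : B (w n) z' = 0 := by
      simp [hz', hB1 n, ht]
    have h1 := hn0 n hn z' (by rw [← hBi]; exact hBz')
    rw [hpsi _ (hw0 n), abs_mul, abs_of_pos hs0] at h1
    have e0 := (ray_sign hanti hsw (hw0 n)).1
    have h2 : fderiv ℝ P (sw (w n) • w n) z' = fderiv ℝ P (sw (w n) • w n) z := by
      rw [hz', map_sub, map_smul, e0, smul_zero, sub_zero]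
    rw [h2] at h1
    have h3 : nrmH adj Vp z' ≤ nrmH adj Vp z := by
      rw [hBn, hBn]
      apply Real.sqrt_le_sqrt
      have h4 : B z z = B z' z' + t ^ 2 := by
        have hz : z = z' + t • w n := by rw [hz']; simp
        have hc : B z' (w n) = 0 := by rw [hBs]; exact hBz'
        rw [hz]
        simp only [map_add, map_smul, add_apply, smul_apply, smul_eq_mul, hBz', hc, hB1 n]
        ring
      rw [h4]
      nlinarith [sq_nonneg t]
    have hnz : 0 ≤ nrmH adj Vp z := by rw [hBn]; exact Real.sqrt_nonneg _
    have h5 : sw (w n) * |fderiv ℝ P (sw (w n) • w n) z| ≤ sw (w n) * (ε * nrmH adj Vp z) := by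
      calc _ ≤ ε * σ * nrmH adj Vp z' := h1
        _ ≤ ε * sw (w n) * nrmH adj Vp z := by
          have hnz' : 0 ≤ nrmH adj Vp z' := by rw [hBn]; exact Real.sqrt_nonneg _
          have := hswl n
          gcongr
        _ = _ := by ring
    exact le_of_mul_le_mul_left h5 hs0
  · intro u hu hub hPb hps
    have hN : ∀ n, 0 < nrmH adj Vp (u n) := by
      intro n
      rw [hBn]
      exact Real.sqrt_pos.2 (hpos _ (hu n).1)
    have hw0 : ∀ n, (nrmH adj Vp (u n))⁻¹ • u n ≠ 0 := fun n =>
      smul_ne_zero (inv_ne_zero (hN n).ne') (hu n).1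
    have hm0 : ∀ n, nrmH adj Vp (u n) • ((nrmH adj Vp (u n))⁻¹ • u n) = u n := fun n =>
      smul_inv_smul₀ (hN n).ne' _
    have hs : ∀ n, sw ((nrmH adj Vp (u n))⁻¹ • u n) = nrmH adj Vp (u n) := by
      intro n
      symm
      apply (hsw _ (hw0 n)).2.2 _ (hN n)
      rw [hm0]
      exact (hu n).2
    constructor
    · obtain ⟨C, hC⟩ := hPb
      refine ⟨C, fun n => ?_⟩
      rw [hs, hm0]
      exact hC n
    · obtain ⟨C, hC⟩ := hub
      intro ε hε
      have hCpos : 0 < C := (hN 0).trans_le (hC 0)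
      obtain ⟨n0, hn0⟩ := hps (ε / C) (by positivity)
      refine ⟨n0, fun n hn z _ => ?_⟩
      have hnz : 0 ≤ nrmH adj Vp z := by rw [hBn]; exact Real.sqrt_nonneg _
      rw [hpsi _ (hw0 n), hs, hm0, abs_mul, abs_of_pos (hN n)]
      calc _ ≤ C * (ε / C * nrmH adj Vp z) :=
            mul_le_mul (hC n) (hn0 n hn z) (abs_nonneg _) hCpos.le
        _ = ε * nrmH adj Vp z := by field_simp
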